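/- arXiv:2405.13734 — 11 statements merged into one kernel-verified Lean document; each statement's English description precedes it below -/
import Mathlib

section
/- Let I = I_1 × ⋯ × I_n ⊂ ℝ^n be an axis-parallel box where each I_i = [a_i, a_i + l_i) is a half-open interval with a_i ∈ ℝ and integer length l_i ∈ ℤ, l_i ≥ 0. Let M be an n×n lower-triangular real matrix with all diagonal entries equal to 1 (unipotent). Then the set ℤ^n ∩ M·I (where M·I denotes the image of I under the linear map M) is finite of cardinality l_1 · l_2 · ⋯ · l_n. -/
/-!
A point `x` with `M x` integral is determined by the integers `mᵢ = ⌊xᵢ - aᵢ⌋`, and these may be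
prescribed arbitrarily. Indeed `(M x)ᵢ = xᵢ + ∑_{j < i} Mᵢⱼ xⱼ`, so once the earlier coordinates are
known, integrality of `(M x)ᵢ` fixes `xᵢ` modulo `1`, and there is exactly one such `xᵢ` in
`[aᵢ + mᵢ, aᵢ + mᵢ + 1)`. The point with prescribed floors is `latticePoint`; its uniqueness is
`eq_of_floor_eq`. The point lies in the box `I` iff `0 ≤ mᵢ < lᵢ` for all `i`, and `M` is
injective, so `ℤⁿ ∩ M·I` is in bijection with `∏ᵢ {0, …, lᵢ - 1}`.
-/

/-- The point `x` with `⌊xᵢ - aᵢ⌋ = mᵢ` and `M x` integral, for `M` lower-triangular unipotent;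
its coordinates are built recursively, the fractional part of `xᵢ - aᵢ` being forced by the earlier
coordinates. -/
noncomputable def latticePoint {n : ℕ} (a : Fin n → ℝ) (M : Matrix (Fin n) (Fin n) ℝ)
    (m : Fin n → ℤ) (i : Fin n) : ℝ :=
  a i + m i + Int.fract (-(∑ j : {j : Fin n // j < i}, M i j * latticePoint a M m j) - a i)
termination_by i
decreasing_by exact j.2

theorem mulVec_apply_of_unipotent {n : ℕ} {M : Matrix (Fin n) (Fin n) ℝ}
    (htri : ∀ i j, i < j → M i j = 0) (hdiag : ∀ i, M i i = 1) (x : Fin n → ℝ) (i : Fin n) :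
    M.mulVec x i = x i + ∑ j : {j : Fin n // j < i}, M i j * x j := by
  have h1 : ∑ j : {j : Fin n // j < i}, M i j * x j = ∑ j with j < i, M i j * x j :=
    (Finset.sum_subtype _ (by simp) fun j => M i j * x j).symm
  rw [h1, Matrix.mulVec, dotProduct, ← Finset.add_sum_erase _ _ (Finset.mem_univ i), hdiag, one_mul]
  congr 1
  symm
  apply Finset.sum_subset
  · intro j hj
    simpa using (Finset.mem_filter.1 hj).2.ne
  · intro j hj hj'
    have h2 : j ≠ i := by simpa using hj
    have h3 : ¬ j < i := by simpa using hj'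
    rw [htri i j (lt_of_le_of_ne (not_lt.1 h3) h2.symm), zero_mul]

theorem floor_latticePoint {n : ℕ} (a : Fin n → ℝ) (M : Matrix (Fin n) (Fin n) ℝ)
    (m : Fin n → ℤ) (i : Fin n) : ⌊latticePoint a M m i - a i⌋ = m i := by
  rw [latticePoint, add_assoc, add_sub_cancel_left, Int.floor_intCast_add, Int.floor_fract,
    add_zero]

theorem mulVec_latticePoint {n : ℕ} (a : Fin n → ℝ) {M : Matrix (Fin n) (Fin n) ℝ}
    (htri : ∀ i j, i < j → M i j = 0) (hdiag : ∀ i, M i i = 1)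
    (m : Fin n → ℤ) (i : Fin n) : ∃ k : ℤ, M.mulVec (latticePoint a M m) i = k := by
  rw [mulVec_apply_of_unipotent htri hdiag, latticePoint, Int.fract]
  set s := ∑ j : {j : Fin n // j < i}, M i j * latticePoint a M m j
  refine ⟨m i - ⌊-s - a i⌋, ?_⟩
  push_cast
  ring

theorem eq_of_floor_eq {n : ℕ} (a : Fin n → ℝ) {M : Matrix (Fin n) (Fin n) ℝ}
    (htri : ∀ i j, i < j → M i j = 0) (hdiag : ∀ i, M i i = 1) {x y : Fin n → ℝ}
    (hx : ∀ i, ∃ k : ℤ, M.mulVec x i = k) (hy : ∀ i, ∃ k : ℤ, M.mulVec y i = k)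
    (hxy : ∀ i, ⌊x i - a i⌋ = ⌊y i - a i⌋) : x = y := by
  funext i
  induction i using WellFoundedLT.induction with
  | ind i ih =>
    obtain ⟨k, hk⟩ := hx i
    obtain ⟨k', hk'⟩ := hy i
    rw [mulVec_apply_of_unipotent htri hdiag] at hk hk'
    have hs : ∑ j : {j : Fin n // j < i}, M i j * x j
        = ∑ j : {j : Fin n // j < i}, M i j * y j :=
      Finset.sum_congr rfl fun j _ => by rw [ih j j.2]
    have hd : x i - y i = ((k - k' : ℤ) : ℝ) := by
      push_cast
      linarith
    -- equal floors put `x i` and `y i` at distance less than one, so their integer difference is `0`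
    have h1 := Int.abs_sub_lt_one_of_floor_eq_floor (hxy i)
    rw [sub_sub_sub_cancel_right, hd, ← Int.cast_abs] at h1
    have h2 : k - k' = 0 := Int.abs_lt_one_iff.1 (by exact_mod_cast h1)
    rw [h2, Int.cast_zero] at hd
    linarith

theorem mulVec_injective_of_unipotent {n : ℕ} {M : Matrix (Fin n) (Fin n) ℝ}
    (htri : ∀ i j, i < j → M i j = 0) (hdiag : ∀ i, M i i = 1) :
    Function.Injective M.mulVec := by
  rw [Matrix.mulVec_injective_iff_isUnit, Matrix.isUnit_iff_isUnit_det,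
    Matrix.det_of_isLowerTriangular M fun i j hij => htri i j hij]
  simp [hdiag]

/-- Let `I = I₁ × ⋯ × Iₙ ⊂ ℝⁿ` be an axis-parallel box where each
`Iᵢ = [aᵢ, aᵢ + lᵢ)` is a half-open interval with `aᵢ ∈ ℝ` and integer length `lᵢ ∈ ℤ`,
`lᵢ ≥ 0`. Let `M` be a lower-triangular unipotent real matrix. Then the set
`ℤⁿ ∩ M·I` is finite of cardinality `l₁ ⋯ lₙ`. -/
theorem stmt0 (n : ℕ) (a : Fin n → ℝ) (l : Fin n → ℤ) (hl : ∀ i, 0 ≤ l i)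
    (M : Matrix (Fin n) (Fin n) ℝ)
    (htri : ∀ i j, i < j → M i j = 0) (hdiag : ∀ i, M i i = 1) :
    let I : Set (Fin n → ℝ) := Set.univ.pi fun i => Set.Ico (a i) (a i + (l i : ℝ))
    let S : Set (Fin n → ℝ) := {v | (∀ i, ∃ k : ℤ, v i = (k : ℝ)) ∧ v ∈ M.mulVec '' I}
    S.Finite ∧ (S.ncard : ℤ) = ∏ i, l i := by
  intro I S
  set F : Finset (Fin n → ℤ) := Fintype.piFinset fun i => Finset.Ico 0 (l i) with hF
  have hI : ∀ x : Fin n → ℝ, x ∈ I ↔ (fun i => ⌊x i - a i⌋) ∈ F := by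
    intro x
    simp only [I, hF, Set.mem_univ_pi, Set.mem_Ico, Fintype.mem_piFinset, Finset.mem_Ico,
      Int.floor_nonneg, Int.floor_lt, sub_nonneg, sub_lt_iff_lt_add']
  have hS : S = (fun m => M.mulVec (latticePoint a M m)) '' (F : Set (Fin n → ℤ)) := by
    ext v
    constructor
    · rintro ⟨hv, x, hx, rfl⟩
      refine ⟨fun i => ⌊x i - a i⌋, (hI x).1 hx, congrArg M.mulVec ?_⟩
      exact eq_of_floor_eq a htri hdiag (mulVec_latticePoint a htri hdiag _) hv
        (floor_latticePoint a M _)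
    · rintro ⟨m, hm, rfl⟩
      refine ⟨mulVec_latticePoint a htri hdiag m, _, (hI _).2 ?_, rfl⟩
      simpa only [floor_latticePoint] using Finset.mem_coe.1 hm
  have hinj : Function.Injective fun m => M.mulVec (latticePoint a M m) := by
    intro m m' h
    have h' := mulVec_injective_of_unipotent htri hdiag h
    funext i
    rw [← floor_latticePoint a M m i, h', floor_latticePoint]
  rw [hS]
  refine ⟨F.finite_toSet.image _, ?_⟩
  rw [Set.ncard_image_of_injective _ hinj, Set.ncard_coe_finset, hF, Fintype.card_piFinset]
  push_cast
  refine Finset.prod_congr rfl fun i _ => ?_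
  rw [Int.card_Ico, sub_zero, Int.toNat_of_nonneg (hl i)]
end

section
/- Let I = I_1 × ⋯ × I_n ⊂ ℝ^n be an axis-parallel box where each I_i = [a_i, a_i + l_i) is a half-open interval with integer length l_i ∈ ℤ, l_i ≥ 0. Let M be an n×n lower-triangular unipotent real matrix with inverse M^{-1} = (m'_{ij})_{i,j}. Then a point v = (v_1, …, v_n) ∈ ℤ^n lies in M·I if and only if for every i there exists δ_i ∈ {0, 1, …, l_i − 1} with v_i = ⌈a_i − Σ_{j<i} m'_{ij} v_j⌉ + δ_i. -/
/-!
Since `M` is invertible, `v ∈ M·I` means `M⁻¹ v ∈ I`. The inverse is again lower-triangular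
unipotent (`inv_apply_eq_zero`, `inv_apply_diag`), so the `i`-th coordinate of `M⁻¹ v` is
`vᵢ + Sᵢ` with `Sᵢ = Σ_{j<i} m'ᵢⱼ vⱼ` (`inv_mulVec_apply`). For integers `vᵢ` and `lᵢ`, the
condition `aᵢ ≤ vᵢ + Sᵢ < aᵢ + lᵢ` is equivalent to `⌈aᵢ - Sᵢ⌉ ≤ vᵢ < ⌈aᵢ - Sᵢ⌉ + lᵢ`, and
`δᵢ` is the difference `vᵢ - ⌈aᵢ - Sᵢ⌉`.
-/

namespace LowerUnipotent

variable {n : ℕ} {M : Matrix (Fin n) (Fin n) ℝ}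

lemma isUnit_det (htri : ∀ i j, i < j → M i j = 0) (hdiag : ∀ i, M i i = 1) :
    IsUnit M.det := by
  have h : M.det = 1 := by
    rw [Matrix.det_of_lowerTriangular M fun i j hij => htri i j hij]
    simp [hdiag]
  simp [h]

lemma inv_apply_eq_zero (htri : ∀ i j, i < j → M i j = 0) (hdiag : ∀ i, M i i = 1)
    {i j : Fin n} (hij : i < j) : M⁻¹ i j = 0 := by
  have : Invertible M := M.invertibleOfIsUnitDet (isUnit_det htri hdiag)
  -- Lower-triangular means block-triangular for the reversed order on the indices.
  have h : M.BlockTriangular OrderDual.toDual := fun i j hij => htri i j hij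
  exact Matrix.blockTriangular_inv_of_blockTriangular h hij

lemma inv_apply_diag (htri : ∀ i j, i < j → M i j = 0) (hdiag : ∀ i, M i i = 1)
    (i : Fin n) : M⁻¹ i i = 1 := by
  have h : (M⁻¹ * M) i i = 1 := by
    rw [Matrix.nonsing_inv_mul M (isUnit_det htri hdiag), Matrix.one_apply_eq]
  rw [Matrix.mul_apply, Finset.sum_eq_single i, hdiag, mul_one] at h
  · exact h
  · intro j _ hj
    rcases lt_or_gt_of_ne hj with hlt | hgt
    · rw [htri j i hlt, mul_zero]
    · rw [inv_apply_eq_zero htri hdiag hgt, zero_mul]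
  · simp

lemma inv_mulVec_apply (htri : ∀ i j, i < j → M i j = 0) (hdiag : ∀ i, M i i = 1)
    (w : Fin n → ℝ) (i : Fin n) :
    M⁻¹.mulVec w i
      = w i + ∑ j ∈ Finset.univ.filter (fun j => j < i), M⁻¹ i j * w j := by
  have hi : i ∉ Finset.univ.filter (fun j => j < i) := by simp
  have hdi : M⁻¹ i i * w i = w i := by rw [inv_apply_diag htri hdiag, one_mul]
  rw [Matrix.mulVec, dotProduct]
  conv_rhs => rw [← hdi]
  rw [← Finset.sum_insert (f := fun j => M⁻¹ i j * w j) hi]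
  symm
  refine Finset.sum_subset (Finset.subset_univ _) fun j _ hj => ?_
  have hij : i < j := by
    simp only [Finset.mem_insert, Finset.mem_filter, Finset.mem_univ, true_and, not_or,
      not_lt] at hj
    exact lt_of_le_of_ne hj.2 (Ne.symm hj.1)
  rw [inv_apply_eq_zero htri hdiag hij, zero_mul]

/-- An integer translate `k + s` lies in a half-open interval `[a, a + l)` of integer length
exactly when `k` is one of the `l` consecutive integers starting at `⌈a - s⌉`. -/
lemma add_mem_Ico_iff (a s : ℝ) (l k : ℤ) :
    (k : ℝ) + s ∈ Set.Ico a (a + (l : ℝ)) ↔ ∃ δ : ℤ, 0 ≤ δ ∧ δ < l ∧ k = ⌈a - s⌉ + δ := by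
  have h₁ : ⌈a - s⌉ ≤ k ↔ a ≤ k + s := by rw [Int.ceil_le, sub_le_iff_le_add]
  have h₂ : k - l < ⌈a - s⌉ ↔ (k : ℝ) + s < a + l := by
    rw [Int.lt_ceil]
    push_cast
    constructor <;> intro h <;> linarith
  rw [Set.mem_Ico, ← h₁, ← h₂]
  constructor
  · rintro ⟨h, h'⟩
    exact ⟨k - ⌈a - s⌉, by omega, by omega, by omega⟩
  · rintro ⟨δ, h0, hl, hk⟩
    exact ⟨by omega, by omega⟩

end LowerUnipotent

/-- Let `I = I₁ × ⋯ × Iₙ ⊂ ℝⁿ` be an axis-parallel box with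
`Iᵢ = [aᵢ, aᵢ + lᵢ)`, `lᵢ ∈ ℤ`, `lᵢ ≥ 0`, and let `M` be lower-triangular unipotent
with inverse `M⁻¹ = (m'ᵢⱼ)`. Then an integer point `v ∈ ℤⁿ` lies in `M·I` if and only if
for every `i` there exists `δᵢ ∈ {0, …, lᵢ − 1}` with
`vᵢ = ⌈aᵢ − Σ_{j<i} m'ᵢⱼ vⱼ⌉ + δᵢ`. -/
theorem stmt2 (n : ℕ) (a : Fin n → ℝ) (l : Fin n → ℤ) (hl : ∀ i, 0 ≤ l i)
    (M : Matrix (Fin n) (Fin n) ℝ)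
    (htri : ∀ i j, i < j → M i j = 0) (hdiag : ∀ i, M i i = 1)
    (v : Fin n → ℤ) :
    (fun i => (v i : ℝ)) ∈
        M.mulVec '' (Set.univ.pi fun i => Set.Ico (a i) (a i + (l i : ℝ))) ↔
      ∀ i, ∃ δ : ℤ, 0 ≤ δ ∧ δ < l i ∧
        v i = ⌈a i - ∑ j ∈ Finset.univ.filter (fun j => j < i), M⁻¹ i j * (v j : ℝ)⌉ + δ := by
  have hu := LowerUnipotent.isUnit_det htri hdiag
  have hmem : (fun i => (v i : ℝ)) ∈
        M.mulVec '' (Set.univ.pi fun i => Set.Ico (a i) (a i + (l i : ℝ))) ↔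
      M⁻¹.mulVec (fun i => (v i : ℝ)) ∈
        Set.univ.pi fun i => Set.Ico (a i) (a i + (l i : ℝ)) := by
    constructor
    · rintro ⟨x, hx, hxv⟩
      rwa [← hxv, Matrix.mulVec_mulVec, Matrix.nonsing_inv_mul M hu, Matrix.one_mulVec]
    · intro h
      exact ⟨_, h, by rw [Matrix.mulVec_mulVec, Matrix.mul_nonsing_inv M hu, Matrix.one_mulVec]⟩
  rw [hmem, Set.mem_univ_pi]
  refine forall_congr' fun i => ?_
  rw [LowerUnipotent.inv_mulVec_apply htri hdiag]
  exact LowerUnipotent.add_mem_Ico_iff _ _ _ _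
end

section
/- Let n ≥ 1 be an integer, let f ∈ ℝ[X] be a monic polynomial of degree n, and let ε > 0. Then the set {x ∈ ℝ : |f(x)| ≤ ε} has Lebesgue measure at most 2 n ε^{1/n}. -/
/-!
Over `ℂ` the polynomial factors as `f(x) = ∏ (x - a)` over its `n` roots. If `|f(x)| ≤ ε`, then some
factor has modulus at most `δ = ε^(1/n)`, since otherwise the product would exceed `δ^n = ε`
(`pow_card_lt_prod_map`). For real `x` this gives `|x - Re a| ≤ |x - a| ≤ δ`, so the sublevel set is
covered by at most `n` intervals of length `2δ`, centred at the real parts of the roots.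
-/

open MeasureTheory

lemma pow_card_lt_prod_map {α : Type*} (g : α → ℝ) {δ : ℝ} (hδ : 0 < δ) (s : Multiset α) :
    s ≠ 0 → (∀ a ∈ s, δ < g a) → δ ^ s.card < (s.map g).prod := by
  induction s using Multiset.induction_on with
  | empty => intro h; exact absurd rfl h
  | cons a s ih =>
    intro _ h
    have ha : δ < g a := h a (Multiset.mem_cons_self a s)
    rw [Multiset.card_cons, Multiset.map_cons, Multiset.prod_cons, pow_succ']
    rcases eq_or_ne s 0 with rfl | hs
    · simpa using ha
    · have hlt := ih hs (fun b hb => h b (Multiset.mem_cons_of_mem hb))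
      exact mul_lt_mul'' ha hlt hδ.le (pow_nonneg hδ.le _)

/-- Let `n ≥ 1`, let `f ∈ ℝ[X]` be monic of degree `n`, and let `ε > 0`.
Then the set `{x ∈ ℝ : |f(x)| ≤ ε}` has Lebesgue measure at most `2 n ε^(1/n)`. -/
theorem stmt3 (n : ℕ) (hn : 1 ≤ n) (f : Polynomial ℝ) (hf : f.Monic)
    (hdeg : f.natDegree = n) (ε : ℝ) (hε : 0 < ε) :
    volume {x : ℝ | |f.eval x| ≤ ε} ≤ ENNReal.ofReal (2 * n * ε ^ ((1 : ℝ) / n)) := by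
  set δ : ℝ := ε ^ ((1 : ℝ) / n) with hδdef
  have hδ : 0 < δ := Real.rpow_pos_of_pos hε _
  have hδn : δ ^ n = ε := by
    rw [hδdef, one_div]
    exact Real.rpow_inv_natCast_pow hε.le (by omega)
  set g : Polynomial ℂ := f.map (algebraMap ℝ ℂ) with hg
  have hgm : g.Monic := hf.map _
  have hsplit : g.Splits := IsAlgClosed.splits g
  have hcard : g.roots.card = n := by
    rw [← hsplit.natDegree_eq_card_roots, hg, hf.natDegree_map, hdeg]
  have hcover : {x : ℝ | |f.eval x| ≤ ε} ⊆
      ⋃ a ∈ g.roots.toFinset, Metric.closedBall a.re δ := by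
    intro x hx
    rw [Set.mem_setOf_eq] at hx
    by_contra hnot
    simp only [Set.mem_iUnion, Multiset.mem_toFinset, Metric.mem_closedBall, not_exists,
      not_le] at hnot
    have hfar : ∀ a ∈ g.roots, δ < ‖(x : ℂ) - a‖ := by
      intro a ha
      refine (hnot a ha).trans_le ?_
      rw [Real.dist_eq]
      simpa using Complex.abs_re_le_norm ((x : ℂ) - a)
    have hne : g.roots ≠ 0 := by
      intro h0
      rw [h0, Multiset.card_zero] at hcard
      omega
    have hlt := pow_card_lt_prod_map (fun a : ℂ => ‖(x : ℂ) - a‖) hδ g.roots hne hfar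
    have heval : |f.eval x| = (g.roots.map (fun a : ℂ => ‖(x : ℂ) - a‖)).prod := by
      have h1 : g.eval (x : ℂ) = ((f.eval x : ℝ) : ℂ) := by
        rw [hg]
        exact Polynomial.eval_map_apply (algebraMap ℝ ℂ) x
      rw [← Real.norm_eq_abs, ← Complex.norm_real, ← h1,
        hsplit.eval_eq_prod_roots_of_monic hgm]
      exact (map_multiset_prod (normHom : ℂ →*₀ ℝ) _).trans (by simp [Multiset.map_map])
    rw [hcard, hδn, ← heval] at hlt
    exact absurd hx (not_le.mpr hlt)
  calc volume {x : ℝ | |f.eval x| ≤ ε}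
      ≤ volume (⋃ a ∈ g.roots.toFinset, Metric.closedBall a.re δ) := measure_mono hcover
    _ ≤ ∑ a ∈ g.roots.toFinset, volume (Metric.closedBall a.re δ) :=
        measure_biUnion_finset_le _ _
    _ = (g.roots.toFinset.card : ENNReal) * ENNReal.ofReal (2 * δ) := by
        simp [Real.volume_closedBall]
    _ ≤ (n : ENNReal) * ENNReal.ofReal (2 * δ) := by
        gcongr
        exact (Multiset.toFinset_card_le _).trans hcard.le
    _ = ENNReal.ofReal (2 * n * δ) := by
        rw [← ENNReal.ofReal_natCast, ← ENNReal.ofReal_mul (Nat.cast_nonneg n)]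
        ring_nf
end

section
/- For every orthogonal matrix k ∈ O_2(ℝ) and every binary cubic form f with real coefficients, q(k·f) = q(f), where k·f is the binary cubic form defined by (k·f)(v) = det(k)^{-1} · f(kᵀ v) for v ∈ ℝ², and q(aX³ + bX²Y + cXY² + dY³) = 5a² + b² + c² + 5d² + 2ac + 2bd. -/
open Matrix

/-!
Orthogonality forces `k` to have first column `(p, r)` with `p² + r² = 1` and second column
`ε (-r, p)`, where `ε = det k = ±1`. For such a matrix with `p, r` arbitrary reals, the coefficients
of `k·f` are explicit polynomials in `p, r`, and `q(k·f) = (p² + r²)³ q(f)` is a polynomial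
identity. Conceptually, `2 q = (3a + c)² + (b + 3d)² + (a - c)² + (b - d)²` is a sum of squared
norms on the components of frequency one and three of `f` restricted to the unit circle.
-/

/-- For every orthogonal matrix `k ∈ O₂(ℝ)` and every real binary cubic
form `f`, we have `q(k·f) = q(f)`, where `(k·f)(v) = det(k)⁻¹ · f(kᵀ v)` and
`q(aX³+bX²Y+cXY²+dY³) = 5a²+b²+c²+5d²+2ac+2bd`. The cubic form `k·f`, with coefficients
`(a', b', c', d')`, is specified by the defining rule as a function on `ℝ²`. -/
theorem stmt7 (k : Matrix (Fin 2) (Fin 2) ℝ) (hk : kᵀ * k = 1)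
    (a b c d a' b' c' d' : ℝ)
    (hact : ∀ x y : ℝ,
      a'*x^3 + b'*x^2*y + c'*x*y^2 + d'*y^3 =
        (k.det)⁻¹ * (a*(k 0 0*x + k 1 0*y)^3 + b*(k 0 0*x + k 1 0*y)^2*(k 0 1*x + k 1 1*y)
          + c*(k 0 0*x + k 1 0*y)*(k 0 1*x + k 1 1*y)^2 + d*(k 0 1*x + k 1 1*y)^3)) :
    5*a'^2 + b'^2 + c'^2 + 5*d'^2 + 2*a'*c' + 2*b'*d' =
      5*a^2 + b^2 + c^2 + 5*d^2 + 2*a*c + 2*b*d := by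
  have h00 : k 0 0 ^ 2 + k 1 0 ^ 2 = 1 := by
    have h := congrFun (congrFun hk 0) 0
    simp [Matrix.mul_apply, Fin.sum_univ_two] at h
    linarith
  have h01 : k 0 0 * k 0 1 + k 1 0 * k 1 1 = 0 := by
    have h := congrFun (congrFun hk 0) 1
    simpa [Matrix.mul_apply, Fin.sum_univ_two] using h
  have hdet : k.det ^ 2 = 1 := by
    have h := congrArg Matrix.det hk
    rw [Matrix.det_mul, Matrix.det_transpose, Matrix.det_one] at h
    linarith
  have hinv : (k.det)⁻¹ = k.det := inv_eq_of_mul_eq_one_left (by linarith)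
  -- The second column of `k` is `det k` times the first column turned by a right angle.
  have e01 : k 0 1 = -(k.det * k 1 0) := by
    rw [Matrix.det_fin_two]
    linear_combination (-k 0 1) * h00 + k 0 0 * h01
  have e11 : k 1 1 = k.det * k 0 0 := by
    rw [Matrix.det_fin_two]
    linear_combination (-k 1 1) * h00 + k 1 0 * h01
  rw [hinv] at hact
  generalize k.det = e at *
  generalize k 0 0 = p at *
  generalize k 1 0 = r at *
  rw [e01, e11] at hact
  -- Evaluation at four points determines the coefficients of `k·f`.
  have h10 := hact 1 0
  have h0 := hact 0 1
  have hp := hact 1 1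
  have hm := hact 1 (-1)
  have ha : a' = e * (a*p^3 - b*p^2*(e*r) + c*p*(e*r)^2 - d*(e*r)^3) := by
    linear_combination h10
  have hd : d' = e * (a*r^3 + b*r^2*(e*p) + c*r*(e*p)^2 + d*(e*p)^3) := by
    linear_combination h0
  have hb : b' = e * (3*a*p^2*r + b*e*(p^3 - 2*p*r^2) + c*e^2*(r^3 - 2*p^2*r)
      + 3*d*e^3*p*r^2) := by
    linear_combination (hp - hm) / 2 - h0
  have hc : c' = e * (3*a*p*r^2 + b*e*(2*p^2*r - r^3) + c*e^2*(p^3 - 2*p*r^2)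
      - 3*d*e^3*p^2*r) := by
    linear_combination (hp + hm) / 2 - h10
  rw [ha, hb, hc, hd]
  have he : e = 1 ∨ e = -1 := by simpa using hdet
  -- For either sign, `q` is multiplied by `(p² + r²)³`.
  have key : ∀ t : ℝ, t = (p^2 + r^2)^3 * t := fun t => by rw [h00]; ring
  rw [key (5*a^2 + b^2 + c^2 + 5*d^2 + 2*a*c + 2*b*d)]
  rcases he with rfl | rfl <;> ring
end

section
/- On the set of binary cubic forms f = aX³ + bX²Y + cXY² + dY³ with real coefficients satisfying q(f) ≤ 1 (where q(f) = 5a² + b² + c² + 5d² + 2ac + 2bd), the maximum value 1/2 of |a| is attained exactly at the two forms f = ±(1/2)(X³ − XY²), and the maximum value √5/2 of |b| is attained exactly at the two forms f = ±(√5/2)(X²Y − (1/5)Y³). -/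
/-!
Completing squares gives two decompositions of the quadratic form,

  `q = 4a² + (a + c)² + (b + d)² + 4d²` and `q = (4/5)b² + 5(d + b/5)² + (a + c)² + 4a²`.

On `q ≤ 1` the first yields `a² ≤ 1/4` and the second `b² ≤ 5/4`. In the case of equality all the
remaining squares vanish, which determines the other three coefficients in terms of `a`
(respectively `b`).
-/

/-- On the set of real binary cubic forms `f = aX³ + bX²Y + cXY² + dY³`
with `q(f) ≤ 1`, the maximum value `1/2` of `|a|` is attained exactly at
`f = ±(1/2)(X³ − XY²)`, and the maximum value `√5/2` of `|b|` is attained exactly at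
`f = ±(√5/2)(X²Y − (1/5)Y³)`. -/
theorem stmt9 :
    (∀ a b c d : ℝ, 5*a^2 + b^2 + c^2 + 5*d^2 + 2*a*c + 2*b*d ≤ 1 → |a| ≤ 1/2) ∧
    (∀ a b c d : ℝ, 5*a^2 + b^2 + c^2 + 5*d^2 + 2*a*c + 2*b*d ≤ 1 →
      (|a| = 1/2 ↔
        (a, b, c, d) = (1/2, 0, -(1/2), 0) ∨ (a, b, c, d) = (-(1/2), 0, 1/2, 0))) ∧
    (∀ a b c d : ℝ, 5*a^2 + b^2 + c^2 + 5*d^2 + 2*a*c + 2*b*d ≤ 1 →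
      |b| ≤ Real.sqrt 5 / 2) ∧
    (∀ a b c d : ℝ, 5*a^2 + b^2 + c^2 + 5*d^2 + 2*a*c + 2*b*d ≤ 1 →
      (|b| = Real.sqrt 5 / 2 ↔
        (a, b, c, d) = (0, Real.sqrt 5 / 2, 0, -(Real.sqrt 5 / 2) * (1/5)) ∨
        (a, b, c, d) = (0, -(Real.sqrt 5 / 2), 0, Real.sqrt 5 / 2 * (1/5)))) := by
  have h5 : Real.sqrt 5 ^ 2 = 5 := Real.sq_sqrt (by norm_num)
  refine ⟨?_, ?_, ?_, ?_⟩
  · intro a b c d h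
    apply abs_le_of_sq_le_sq _ (by norm_num)
    nlinarith [sq_nonneg (a + c), sq_nonneg (b + d), sq_nonneg d]
  · intro a b c d h
    constructor
    · intro ha
      have ha2 : a ^ 2 = 1 / 4 := by rw [← sq_abs, ha]; norm_num
      have hac : a + c = 0 := pow_eq_zero_iff two_ne_zero |>.1 <| le_antisymm
        (by nlinarith [sq_nonneg (b + d), sq_nonneg d]) (sq_nonneg _)
      have hd : d = 0 := pow_eq_zero_iff two_ne_zero |>.1 <| le_antisymm
        (by nlinarith [sq_nonneg (b + d), sq_nonneg (a + c)]) (sq_nonneg _)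
      have hbd : b + d = 0 := pow_eq_zero_iff two_ne_zero |>.1 <| le_antisymm
        (by nlinarith [sq_nonneg (a + c), sq_nonneg d]) (sq_nonneg _)
      simp only [Prod.mk.injEq]
      rcases eq_or_eq_neg_of_abs_eq ha with h1 | h1
      · left; refine ⟨?_, ?_, ?_, ?_⟩ <;> linarith
      · right; refine ⟨?_, ?_, ?_, ?_⟩ <;> linarith
    · simp only [Prod.mk.injEq]
      rintro (⟨rfl, -⟩ | ⟨rfl, -⟩)
      · exact abs_of_pos (by norm_num)
      · rw [abs_neg]; exact abs_of_pos (by norm_num)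
  · intro a b c d h
    apply abs_le_of_sq_le_sq _ (by positivity)
    nlinarith [sq_nonneg (a + c), sq_nonneg (d + b / 5), sq_nonneg a]
  · intro a b c d h
    constructor
    · intro hb
      have hb2 : b ^ 2 = 5 / 4 := by rw [← sq_abs, hb, div_pow, h5]; norm_num
      have hac : a + c = 0 := pow_eq_zero_iff two_ne_zero |>.1 <| le_antisymm
        (by nlinarith [sq_nonneg (d + b / 5), sq_nonneg a]) (sq_nonneg _)
      have ha : a = 0 := pow_eq_zero_iff two_ne_zero |>.1 <| le_antisymm
        (by nlinarith [sq_nonneg (d + b / 5), sq_nonneg (a + c)]) (sq_nonneg _)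
      have hbd : d + b / 5 = 0 := pow_eq_zero_iff two_ne_zero |>.1 <| le_antisymm
        (by nlinarith [sq_nonneg (a + c), sq_nonneg a]) (sq_nonneg _)
      simp only [Prod.mk.injEq]
      rcases eq_or_eq_neg_of_abs_eq hb with h1 | h1
      · left; refine ⟨?_, ?_, ?_, ?_⟩ <;> linarith
      · right; refine ⟨?_, ?_, ?_, ?_⟩ <;> linarith
    · simp only [Prod.mk.injEq]
      rintro (⟨-, rfl, -⟩ | ⟨-, rfl, -⟩)
      · exact abs_of_nonneg (by positivity)
      · rw [abs_neg]; exact abs_of_nonneg (by positivity)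
end

section
/- Let M ∈ GL_2(ℝ) satisfy det(M) = ±1, and let f = aX³ + bX²Y + cXY² + dY³ be a binary cubic form with real coefficients. Then disc(M·f) = disc(f), where M·f is the binary cubic form defined by (M·f)(v) = det(M)^{-1} · f(Mᵀ v) for v ∈ ℝ², and where disc(aX³ + bX²Y + cXY² + dY³) = 18abcd + b²c² − 4ac³ − 4b³d − 27a²d². -/
/-!
The discriminant is a relative invariant of degree 4 in the coefficients: substituting
`(X, Y) ↦ Mᵀ (X, Y)` multiplies it by `(det M)⁶` and scaling the form by `t` multiplies it by `t⁴`
(`disc_smul_subst`). With `t = (det M)⁻¹` the total factor is `(det M)²`, which is `1` when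
`det M = ±1`. The coefficients of `M·f` are read off from its values at `(1,0)`, `(0,1)`, `(1,1)`
and `(1,-1)`, which determine a binary cubic form.
-/

/-- Transformation law of the discriminant under the substitution `X ↦ pX + rY`, `Y ↦ qX + sY`
followed by scaling by `t`; the primed variables are the coefficients of the resulting form. -/
theorem disc_smul_subst (a b c d p q r s t a' b' c' d' : ℝ)
    (ha : a' = t*(a*p^3 + b*p^2*q + c*p*q^2 + d*q^3))
    (hb : b' = t*(3*a*p^2*r + b*(p^2*s + 2*p*q*r) + c*(2*p*q*s + q^2*r) + 3*d*q^2*s))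
    (hc : c' = t*(3*a*p*r^2 + b*(2*p*r*s + q*r^2) + c*(p*s^2 + 2*q*r*s) + 3*d*q*s^2))
    (hd : d' = t*(a*r^3 + b*r^2*s + c*r*s^2 + d*s^3)) :
    18*a'*b'*c'*d' + b'^2*c'^2 - 4*a'*c'^3 - 4*b'^3*d' - 27*a'^2*d'^2 =
      t^4*(p*s - q*r)^6*(18*a*b*c*d + b^2*c^2 - 4*a*c^3 - 4*b^3*d - 27*a^2*d^2) := by
  subst ha hb hc hd
  ring

/-- Let `M ∈ GL₂(ℝ)` with `det M = ±1` and let `f = aX³+bX²Y+cXY²+dY³`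
be a real binary cubic form. Then `disc(M·f) = disc(f)`, where
`(M·f)(v) = det(M)⁻¹ · f(Mᵀ v)` and `disc = 18abcd + b²c² − 4ac³ − 4b³d − 27a²d²`.
The cubic form `M·f`, with coefficients `(a', b', c', d')`, is specified by the defining
rule as a function on `ℝ²`. -/
theorem stmt10 (M : Matrix (Fin 2) (Fin 2) ℝ) (hM : M.det = 1 ∨ M.det = -1)
    (a b c d a' b' c' d' : ℝ)
    (hact : ∀ x y : ℝ,
      a'*x^3 + b'*x^2*y + c'*x*y^2 + d'*y^3 =
        (M.det)⁻¹ * (a*(M 0 0*x + M 1 0*y)^3 + b*(M 0 0*x + M 1 0*y)^2*(M 0 1*x + M 1 1*y)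
          + c*(M 0 0*x + M 1 0*y)*(M 0 1*x + M 1 1*y)^2 + d*(M 0 1*x + M 1 1*y)^3)) :
    18*a'*b'*c'*d' + b'^2*c'^2 - 4*a'*c'^3 - 4*b'^3*d' - 27*a'^2*d'^2 =
      18*a*b*c*d + b^2*c^2 - 4*a*c^3 - 4*b^3*d - 27*a^2*d^2 := by
  have h10 := hact 1 0
  have h01 := hact 0 1
  have h11 := hact 1 1
  have h1n := hact 1 (-1)
  have key := disc_smul_subst a b c d (M 0 0) (M 0 1) (M 1 0) (M 1 1) (M.det)⁻¹ a' b' c' d'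
    (by linear_combination h10)
    (by linear_combination (h11 - h1n) / 2 - h01)
    (by linear_combination (h11 + h1n) / 2 - h10)
    (by linear_combination h01)
  rw [key, ← Matrix.det_fin_two]
  rcases hM with h | h <;> rw [h] <;> norm_num
end

section
/- Let p = aX³ + bX² + cX + d be a polynomial with real coefficients, a ≠ 0, whose discriminant Δ = 18abcd + b²c² − 4ac³ − 4b³d − 27a²d² is nonzero. Then: p has three distinct real roots if and only if Δ > 0, and p has exactly one real root if and only if Δ < 0. -/
/-!
A real cubic has a real root `r`, because irreducible real polynomials have degree at most two.
Dividing by `X - r` gives `p = (X - r) q` with `q = aX² + eX + f`, and the discriminant factors as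
`Δ = (e² - 4af) q(r)²`. So `Δ` has the sign of the discriminant of `q`: if `Δ > 0`, then `q` has
two distinct real roots, both different from `r` since `q(r) ≠ 0`; if `Δ < 0`, then `q` has no
real root and `r` is the only root of `p`. As `Δ ≠ 0`, and having three distinct roots excludes
having exactly one, both implications are equivalences.
-/

theorem cubic_exists_root (a b c d : ℝ) (ha : a ≠ 0) :
    ∃ r : ℝ, a*r^3 + b*r^2 + c*r + d = 0 := by
  have hdeg : (Cubic.toPoly ⟨a, b, c, d⟩).natDegree = 3 := Cubic.natDegree_of_a_ne_zero' ha
  by_contra! hno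
  have hirr : Irreducible (Cubic.toPoly ⟨a, b, c, d⟩) := by
    rw [Polynomial.irreducible_iff_roots_eq_zero_of_degree_le_three (by omega) (by omega)]
    refine Multiset.eq_zero_of_forall_notMem fun r hr => hno r ?_
    have h := (Polynomial.mem_roots'.mp hr).2
    simpa [Cubic.toPoly, Polynomial.IsRoot] using h
  have := hirr.natDegree_le_two
  omega

/-- The factorization `aX³ + bX² + cX + d = (X - r)(aX² + eX + f)`, stated by comparing
coefficients. -/
theorem cubic_exists_factor (a b c d : ℝ) (ha : a ≠ 0) :
    ∃ r e f : ℝ, b = e - a*r ∧ c = f - e*r ∧ d = -(f*r) := by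
  obtain ⟨r, hr⟩ := cubic_exists_root a b c d ha
  exact ⟨r, b + a*r, c + (b + a*r)*r, by ring, by ring, by linear_combination hr⟩

theorem three_roots_of_discr_pos (a b c d : ℝ) (ha : a ≠ 0)
    (h : 0 < 18*a*b*c*d + b^2*c^2 - 4*a*c^3 - 4*b^3*d - 27*a^2*d^2) :
    ∃ x y z : ℝ, x ≠ y ∧ x ≠ z ∧ y ≠ z ∧
      a*x^3 + b*x^2 + c*x + d = 0 ∧
      a*y^3 + b*y^2 + c*y + d = 0 ∧
      a*z^3 + b*z^2 + c*z + d = 0 := by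
  obtain ⟨r, e, f, rfl, rfl, rfl⟩ := cubic_exists_factor a b c d ha
  have h' : 0 < (e^2 - 4*a*f) * (a*r^2 + e*r + f)^2 := by
    convert h using 1
    ring
  have hD : 0 < e^2 - 4*a*f := pos_of_mul_pos_left h' (sq_nonneg _)
  have hq : a*r^2 + e*r + f ≠ 0 := by
    intro h0
    simp [h0] at h'
  obtain ⟨s, hs, hs2⟩ : ∃ s : ℝ, 0 < s ∧ s^2 = e^2 - 4*a*f :=
    ⟨_, Real.sqrt_pos.mpr hD, Real.sq_sqrt hD.le⟩
  have hy : a*((-e + s)/(2*a))^2 + e*((-e + s)/(2*a)) + f = 0 := by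
    field_simp
    linear_combination hs2
  have hz : a*((-e - s)/(2*a))^2 + e*((-e - s)/(2*a)) + f = 0 := by
    field_simp
    linear_combination hs2
  have hyz : (-e + s)/(2*a) ≠ (-e - s)/(2*a) := by
    intro h0
    field_simp at h0
    linarith
  generalize (-e + s)/(2*a) = y at *
  generalize (-e - s)/(2*a) = z at *
  refine ⟨r, y, z, ?_, ?_, hyz, by ring, ?_, ?_⟩
  · rintro rfl
    exact hq hy
  · rintro rfl
    exact hq hz
  · linear_combination (y - r) * hy
  · linear_combination (z - r) * hz

theorem unique_root_of_discr_neg (a b c d : ℝ) (ha : a ≠ 0)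
    (h : 18*a*b*c*d + b^2*c^2 - 4*a*c^3 - 4*b^3*d - 27*a^2*d^2 < 0) :
    ∃! x : ℝ, a*x^3 + b*x^2 + c*x + d = 0 := by
  obtain ⟨r, e, f, rfl, rfl, rfl⟩ := cubic_exists_factor a b c d ha
  have h' : (e^2 - 4*a*f) * (a*r^2 + e*r + f)^2 < 0 := by
    convert h using 1
    ring
  have hD : e^2 - 4*a*f < 0 := by
    by_contra! h0
    exact absurd h' (not_lt.mpr (mul_nonneg h0 (sq_nonneg _)))
  refine ⟨r, by ring, fun y hy => ?_⟩
  have hmul : (y - r) * (a*y^2 + e*y + f) = 0 := by linear_combination hy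
  rcases mul_eq_zero.mp hmul with h0 | h0
  · linarith
    -- A root of the quadratic would make its discriminant the square `(2ay + e)²`.
  · have : (2*a*y + e)^2 = e^2 - 4*a*f := by linear_combination 4*a*h0
    linarith [sq_nonneg (2*a*y + e)]

/-- Let `p = aX³ + bX² + cX + d` be a real cubic polynomial with
`a ≠ 0` and nonzero discriminant `Δ = 18abcd + b²c² − 4ac³ − 4b³d − 27a²d²`. Then `p` has
three distinct real roots iff `Δ > 0`, and exactly one real root iff `Δ < 0`. -/
theorem stmt12 (a b c d : ℝ) (ha : a ≠ 0)
    (hΔ : 18*a*b*c*d + b^2*c^2 - 4*a*c^3 - 4*b^3*d - 27*a^2*d^2 ≠ 0) :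
    ((∃ x y z : ℝ, x ≠ y ∧ x ≠ z ∧ y ≠ z ∧
        a*x^3 + b*x^2 + c*x + d = 0 ∧
        a*y^3 + b*y^2 + c*y + d = 0 ∧
        a*z^3 + b*z^2 + c*z + d = 0) ↔
      0 < 18*a*b*c*d + b^2*c^2 - 4*a*c^3 - 4*b^3*d - 27*a^2*d^2) ∧
    ((∃! x : ℝ, a*x^3 + b*x^2 + c*x + d = 0) ↔
      18*a*b*c*d + b^2*c^2 - 4*a*c^3 - 4*b^3*d - 27*a^2*d^2 < 0) := by
  refine ⟨⟨fun ⟨x, y, _, hxy, _, _, hx, hy, _⟩ => ?_, three_roots_of_discr_pos a b c d ha⟩,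
    ⟨fun hu => ?_, unique_root_of_discr_neg a b c d ha⟩⟩
  · by_contra! hle
    exact hxy ((unique_root_of_discr_neg a b c d ha (lt_of_le_of_ne hle hΔ)).unique hx hy)
  · by_contra! hle
    obtain ⟨x, y, _, hxy, _, _, hx, hy, _⟩ :=
      three_roots_of_discr_pos a b c d ha (lt_of_le_of_ne hle hΔ.symm)
    exact hxy (hu.unique hx hy)
end

section
/- Let t ∈ ℝ, s > 0, λ > 0, and let f = aX³ + bX²Y + cXY² + dY³ be a binary cubic form with a ∈ ℤ, a ≠ 0, and b, c, d ∈ ℝ. If q(a(s)^{-1} · (n(t)^{-1} · f)) < λ², then s < (λ/2)^{1/3}. Here q(aX³ + bX²Y + cXY² + dY³) = 5a² + b² + c² + 5d² + 2ac + 2bd, n(t) is the matrix with rows (1, 0) and (t, 1), a(s) is the diagonal matrix with entries (s^{-1}, s), and GL_2(ℝ) acts on binary cubic forms by (M·f)(v) = det(M)^{-1} · f(Mᵀ v). -/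
/-!
Since `q = 4a² + (a + c)² + (b + d)² + 4d² ≥ 4a²`, the bound `q < λ²` forces `2|a₂| < λ` for the
`X³`-coefficient `a₂` of the transformed form. That coefficient is `s³ a`, as `n(t)⁻¹` fixes the
`X³`-coefficient and `a(s)⁻¹` scales it by `s³`; as `a` is a nonzero integer, `2s³ ≤ 2|a₂| < λ`.
-/

/-- `IsCubicActOn M (a,b,c,d) (a',b',c',d')` says that the binary cubic form with
coefficients `(a',b',c',d')` equals `M·f` where `f` has coefficients `(a,b,c,d)`, under
the rule `(M·f)(v) = det(M)⁻¹ · f(Mᵀ v)`. -/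
def IsCubicActOn (M : Matrix (Fin 2) (Fin 2) ℝ) (a b c d a' b' c' d' : ℝ) : Prop :=
  ∀ x y : ℝ, a'*x^3 + b'*x^2*y + c'*x*y^2 + d'*y^3 =
    (M.det)⁻¹ * (a*(M 0 0*x + M 1 0*y)^3 + b*(M 0 0*x + M 1 0*y)^2*(M 0 1*x + M 1 1*y)
      + c*(M 0 0*x + M 1 0*y)*(M 0 1*x + M 1 1*y)^2 + d*(M 0 1*x + M 1 1*y)^3)

/-- Let `t ∈ ℝ`, `s > 0`, `λ > 0`, and let `f = aX³+bX²Y+cXY²+dY³` be a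
binary cubic form with `a ∈ ℤ`, `a ≠ 0`, and `b, c, d ∈ ℝ`. If
`q(a(s)⁻¹·(n(t)⁻¹·f)) < λ²` then `s < (λ/2)^(1/3)`. Here
`q(aX³+bX²Y+cXY²+dY³) = 5a²+b²+c²+5d²+2ac+2bd`, `n(t) = [[1,0],[t,1]]` and
`a(s) = diag(s⁻¹, s)`. -/
theorem stmt13 (t s lam : ℝ) (hs : 0 < s) (hlam : 0 < lam)
    (aInt : ℤ) (ha : aInt ≠ 0) (b c d : ℝ)
    (a₁ b₁ c₁ d₁ a₂ b₂ c₂ d₂ : ℝ)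
    (h1 : IsCubicActOn (!![1, 0; t, 1])⁻¹ (aInt : ℝ) b c d a₁ b₁ c₁ d₁)
    (h2 : IsCubicActOn (!![s⁻¹, 0; 0, s])⁻¹ a₁ b₁ c₁ d₁ a₂ b₂ c₂ d₂)
    (hq : 5*a₂^2 + b₂^2 + c₂^2 + 5*d₂^2 + 2*a₂*c₂ + 2*b₂*d₂ < lam^2) :
    s < (lam / 2) ^ ((1 : ℝ) / 3) := by
  -- Evaluating both actions at `(x, y) = (1, 0)` isolates the `X³`-coefficients.
  have e1 : a₁ = aInt := by
    have h := h1 1 0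
    simpa [Matrix.inv_def, Matrix.adjugate_fin_two, Matrix.det_fin_two] using h
  have e2 : a₂ = a₁ * s ^ 3 := by
    have h := h2 1 0
    simpa [Matrix.inv_def, Matrix.adjugate_fin_two, Matrix.det_fin_two, hs.ne'] using h
  have hs3 : 0 < s ^ 3 := by positivity
  have hA : (1 : ℝ) ≤ |(aInt : ℝ)| := by exact_mod_cast Int.one_le_abs ha
  have hle : s ^ 3 ≤ |a₂| := by
    rw [e2, e1, abs_mul, abs_of_pos hs3]
    nlinarith
  -- `q = 4a² + (a + c)² + (b + d)² + 4d²`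
  have h4 : (2 * a₂) ^ 2 < lam ^ 2 := by
    nlinarith [sq_nonneg (a₂ + c₂), sq_nonneg (b₂ + d₂), sq_nonneg d₂]
  have h5 : |2 * a₂| < lam := abs_lt_of_sq_lt_sq h4 hlam.le
  rw [abs_mul, abs_two] at h5
  have h6 : s ^ (3 : ℝ) < lam / 2 := by
    rw [show (3 : ℝ) = ((3 : ℕ) : ℝ) by norm_num, Real.rpow_natCast]
    linarith
  rw [one_div]
  exact (Real.lt_rpow_inv_iff_of_pos hs.le (by positivity) (by norm_num)).2 h6
end

section
/- For every 2×2 real matrix g with det(g) = ±1 there exist a matrix h ∈ GL_2(ℤ) (an integer matrix with determinant ±1), real numbers t, s, and k ∈ O_2(ℝ) such that h g = n(t) a(s) k, with |t| ≤ 1/2 and s ≥ (1 − t²)^{1/4}. In other words, every left GL_2(ℤ)-orbit in SL_2^±(ℝ) meets the Gauss set F' = {n(t) a(s) k : |t| ≤ 1/2, s ≥ (1 − t²)^{1/4}, k ∈ O_2(ℝ)}. -/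
/-!
The rows `w₁, w₂` of `g` span a lattice of covolume one, and the theorem is Gauss reduction for it.
The Gram data `E = |w₁|²`, `F = ⟨w₁, w₂⟩`, `N = |w₂|²` satisfy `E N - F² = 1`, so they determine the
point `z = (F + i) / E` of the upper half plane, with `Re z = F / E` and `|z|² = N / E`. Changing the
basis by `SL₂(ℤ)` moves `z` by a Möbius transformation, so the standard fundamental domain of the
modular group provides a basis with `|F| ≤ E / 2` and `E ≤ N` (`exists_reduced_basis`).

For such a basis, Gram–Schmidt gives `t = F / E`, `s = E^(-1/2)` and an orthogonal `k`, and
`E ≤ N` reads `1 - t² ≤ s⁴` (`exists_iwasawa`).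
-/

open Matrix

/-- Gauss reduction of a binary quadratic form of determinant one with Gram data `E, F, N`: some
integral change of basis `w₁' = c w₂ + d w₁`, `w₂' = a w₂ + b w₁` makes it reduced. -/
lemma exists_reduced_basis (E F N : ℝ) (hE : 0 < E) (hdet : E * N - F ^ 2 = 1) :
    ∃ a b c d : ℤ, a * d - b * c = 1 ∧
      2 * |a * c * N + (a * d + b * c) * F + b * d * E| ≤
        c ^ 2 * N + 2 * c * d * F + d ^ 2 * E ∧
      (c ^ 2 * N + 2 * c * d * F + d ^ 2 * E : ℝ) ≤ a ^ 2 * N + 2 * a * b * F + b ^ 2 * E := by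
  let z : UpperHalfPlane := ⟨⟨F / E, 1 / E⟩, by positivity⟩
  obtain ⟨γ, h1, h2⟩ := ModularGroup.exists_smul_mem_fd z
  have hγ : γ 0 0 * γ 1 1 - γ 0 1 * γ 1 0 = 1 := by
    rw [← Matrix.det_fin_two]; exact γ.2
  refine ⟨γ 0 0, γ 0 1, γ 1 0, γ 1 1, hγ, ?_⟩
  have hact : ((γ • z : UpperHalfPlane) : ℂ) =
      ((γ 0 0 : ℂ) * z + γ 0 1) / ((γ 1 0 : ℂ) * z + γ 1 1) := by
    rw [UpperHalfPlane.specialLinearGroup_apply]; simp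
  have hγ' : (γ 0 0 * γ 1 1 - γ 0 1 * γ 1 0 : ℝ) = 1 := by exact_mod_cast hγ
  generalize γ 0 0 = a at *
  generalize γ 0 1 = b at *
  generalize γ 1 0 = c at *
  generalize γ 1 1 = d at *
  have hz : (z : ℂ) = ⟨F / E, 1 / E⟩ := rfl
  have hre : (γ • z).re = ((γ • z : UpperHalfPlane) : ℂ).re := rfl
  rw [hre] at h2
  rw [hact] at h1 h2
  have hN : N = (1 + F ^ 2) / E := by field_simp; linarith
  -- the new value of `E`, as a sum of squares
  have hD : c ^ 2 * N + 2 * c * d * F + d ^ 2 * E = ((c * F + d * E) ^ 2 + (c : ℝ) ^ 2) / E := by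
    rw [hN]; field_simp; ring
  have hDpos : (0 : ℝ) < c ^ 2 * N + 2 * c * d * F + d ^ 2 * E := by
    rw [hD]
    apply div_pos _ hE
    by_cases hc : (c : ℝ) = 0
    · have hd : (d : ℝ) ≠ 0 := by
        rintro hd; rw [hc, hd] at hγ'; norm_num at hγ'
      rw [hc, zero_mul, zero_add]; positivity
    · positivity
  have hn2 : Complex.normSq ((c : ℂ) * z + d) = (c ^ 2 * N + 2 * c * d * F + d ^ 2 * E) / E := by
    rw [hz, hN, Complex.normSq_apply]; simp; field_simp; ring
  have hn1 : Complex.normSq ((a : ℂ) * z + b) = (a ^ 2 * N + 2 * a * b * F + b ^ 2 * E) / E := by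
    rw [hz, hN, Complex.normSq_apply]; simp; field_simp; ring
  have hr : (((a : ℂ) * z + b) / ((c : ℂ) * z + d)).re =
      (a * c * N + (a * d + b * c) * F + b * d * E) /
        (c ^ 2 * N + 2 * c * d * F + d ^ 2 * E) := by
    rw [Complex.div_re, hn2, ← add_div, div_div_eq_mul_div]
    congr 1
    rw [hz, hN]; simp; field_simp; ring
  constructor
  · rw [hr, abs_div, abs_of_pos hDpos, div_le_iff₀ hDpos] at h2
    linarith
  · rw [map_div₀, hn1, hn2, div_div_div_cancel_right₀ hE.ne', one_le_div hDpos] at h1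
    exact h1

/-- A matrix with rows `(p, q)` and `(r, u)` that form a reduced basis lies in the Gauss set. -/
lemma exists_iwasawa (p q r u : ℝ) (hdet : (p * u - q * r) ^ 2 = 1)
    (hF : 2 * |p * r + q * u| ≤ p ^ 2 + q ^ 2) (hN : p ^ 2 + q ^ 2 ≤ r ^ 2 + u ^ 2) :
    ∃ (t s : ℝ) (k : Matrix (Fin 2) (Fin 2) ℝ),
      |t| ≤ 1/2 ∧ (1 - t^2) ^ ((1 : ℝ)/4) ≤ s ∧ kᵀ * k = 1 ∧
      !![p, q; r, u] = !![1, 0; t, 1] * !![s⁻¹, 0; 0, s] * k := by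
  have hE : 0 < p ^ 2 + q ^ 2 := by
    by_contra hcon
    have hp : p = 0 := by nlinarith [sq_nonneg p, sq_nonneg q]
    have hq : q = 0 := by nlinarith [sq_nonneg p, sq_nonneg q]
    rw [hp, hq] at hdet; norm_num at hdet
  obtain ⟨s, hs, hsE⟩ : ∃ s : ℝ, 0 < s ∧ s ^ 2 * (p ^ 2 + q ^ 2) = 1 := by
    refine ⟨(√(p ^ 2 + q ^ 2))⁻¹, by positivity, ?_⟩
    rw [inv_pow, Real.sq_sqrt hE.le, inv_mul_cancel₀ hE.ne']
  set F := p * r + q * u with hFdef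
  have hEN : (p ^ 2 + q ^ 2) * (r ^ 2 + u ^ 2) = F ^ 2 + 1 := by rw [← hdet, hFdef]; ring
  -- `s ^ 2 = 1 / E`, so the Gram–Schmidt coefficient is `F / E = s ^ 2 * F`
  have ht : |s ^ 2 * F| ≤ 1 / 2 := by
    rw [abs_mul, abs_of_pos (by positivity : 0 < s ^ 2)]
    nlinarith [mul_le_mul_of_nonneg_left hF (sq_nonneg s)]
  have hs4 : 1 - (s ^ 2 * F) ^ 2 ≤ s ^ 4 := by
    have h1 : s ^ 4 * (p ^ 2 + q ^ 2) ^ 2 = 1 := by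
      calc _ = (s ^ 2 * (p ^ 2 + q ^ 2)) ^ 2 := by ring
        _ = 1 := by rw [hsE]; norm_num
    have h2 : s ^ 4 * (p ^ 2 + q ^ 2) ^ 2 ≤ s ^ 4 * (F ^ 2 + 1) := by
      gcongr
      nlinarith
    nlinarith
  refine ⟨s ^ 2 * F, s, !![s * p, s * q; s⁻¹ * (r - s ^ 2 * F * p), s⁻¹ * (u - s ^ 2 * F * q)],
    ht, ?_, ?_, ?_⟩
  · have h0 : 0 ≤ 1 - (s ^ 2 * F) ^ 2 := by
      rw [← sq_abs]; nlinarith [abs_nonneg (s ^ 2 * F)]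
    calc (1 - (s ^ 2 * F) ^ 2) ^ ((1 : ℝ) / 4) ≤ (s ^ 4) ^ ((1 : ℝ) / 4) :=
          Real.rpow_le_rpow h0 hs4 (by norm_num)
      _ = s := by
          rw [← Real.rpow_natCast, ← Real.rpow_mul hs.le]; norm_num
  · -- orthonormality of the rows is what Gram–Schmidt gives directly
    rw [mul_eq_one_comm]
    have h00 : s * p * (s * p) + s * q * (s * q) = 1 := by rw [← hsE]; ring
    have h01 : s * p * (s⁻¹ * (r - s ^ 2 * F * p)) + s * q * (s⁻¹ * (u - s ^ 2 * F * q)) = 0 := by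
      calc _ = (s * s⁻¹) * (F - s ^ 2 * (p ^ 2 + q ^ 2) * F) := by rw [hFdef]; ring
        _ = 0 := by rw [hsE]; ring
    have h11 : s⁻¹ * (r - s ^ 2 * F * p) * (s⁻¹ * (r - s ^ 2 * F * p)) +
        s⁻¹ * (u - s ^ 2 * F * q) * (s⁻¹ * (u - s ^ 2 * F * q)) = 1 := by
      have h2 : (r - s ^ 2 * F * p) ^ 2 + (u - s ^ 2 * F * q) ^ 2 = s ^ 2 := by
        calc _ = (r ^ 2 + u ^ 2) - 2 * s ^ 2 * F ^ 2
              + s ^ 2 * F ^ 2 * (s ^ 2 * (p ^ 2 + q ^ 2)) := by rw [hFdef]; ring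
          _ = (s ^ 2 * (p ^ 2 + q ^ 2)) * (r ^ 2 + u ^ 2) - s ^ 2 * F ^ 2 := by rw [hsE]; ring
          _ = s ^ 2 := by linear_combination s ^ 2 * hEN
      calc _ = (s⁻¹) ^ 2 * ((r - s ^ 2 * F * p) ^ 2 + (u - s ^ 2 * F * q) ^ 2) := by ring
        _ = 1 := by rw [h2]; field_simp
    ext i j
    fin_cases i <;> fin_cases j <;> simp [Matrix.mul_apply, Fin.sum_univ_two]
    · exact h00
    · exact h01
    · linarith
    · exact h11
  · ext i j
    fin_cases i <;> fin_cases j <;> simp [Matrix.mul_apply, Fin.sum_univ_two] <;> field_simp <;> ring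

/-- For every `2×2` real matrix `g` with `det g = ±1` there exist
`h ∈ GL₂(ℤ)` (an integer matrix of determinant `±1`), `t, s ∈ ℝ` and `k ∈ O₂(ℝ)` such
that `h g = n(t) a(s) k` with `|t| ≤ 1/2` and `s ≥ (1 − t²)^(1/4)`: every left
`GL₂(ℤ)`-orbit in `SL₂^±(ℝ)` meets the Gauss set. Here `n(t) = [[1,0],[t,1]]` and
`a(s) = diag(s⁻¹, s)`. -/
theorem stmt16 (g : Matrix (Fin 2) (Fin 2) ℝ) (hg : g.det = 1 ∨ g.det = -1) :
    ∃ (h : Matrix (Fin 2) (Fin 2) ℤ) (t s : ℝ) (k : Matrix (Fin 2) (Fin 2) ℝ),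
      (h.det = 1 ∨ h.det = -1) ∧ |t| ≤ 1/2 ∧ (1 - t^2) ^ ((1 : ℝ)/4) ≤ s ∧
      kᵀ * k = 1 ∧
      (h.map (Int.cast : ℤ → ℝ)) * g = !![1, 0; t, 1] * !![s⁻¹, 0; 0, s] * k := by
  obtain ⟨p, q, r, u, rfl⟩ : ∃ p q r u : ℝ, g = !![p, q; r, u] :=
    ⟨_, _, _, _, Matrix.eta_fin_two g⟩
  rw [Matrix.det_fin_two_of] at hg
  have hsq : (p * u - q * r) ^ 2 = 1 := by rcases hg with h | h <;> rw [h] <;> norm_num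
  have hE : 0 < p ^ 2 + q ^ 2 := by
    by_contra hcon
    have hp : p = 0 := by nlinarith [sq_nonneg p, sq_nonneg q]
    have hq : q = 0 := by nlinarith [sq_nonneg p, sq_nonneg q]
    rw [hp, hq] at hsq; norm_num at hsq
  obtain ⟨a, b, c, d, hdet, hF, hN⟩ := exists_reduced_basis (p ^ 2 + q ^ 2) (p * r + q * u)
    (r ^ 2 + u ^ 2) hE (by rw [← hsq]; ring)
  have hdet' : (a * d - b * c : ℝ) = 1 := by exact_mod_cast hdet
  obtain ⟨t, s, k, ht, hs, hk, heq⟩ := exists_iwasawa (d * p + c * r) (d * q + c * u)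
    (b * p + a * r) (b * q + a * u)
    (by
      calc _ = (a * d - b * c : ℝ) ^ 2 * (p * u - q * r) ^ 2 := by ring
        _ = 1 := by rw [hdet', hsq]; norm_num)
    (by convert hF using 1 <;> [(congr 2; ring); ring])
    (by convert hN using 1 <;> ring)
  refine ⟨!![d, c; b, a], t, s, k, Or.inl ?_, ht, hs, hk, ?_⟩
  · rw [Matrix.det_fin_two_of]; linarith
  · rw [← heq]
    ext i j
    fin_cases i <;> fin_cases j <;> simp [Matrix.mul_apply, Fin.sum_univ_two]
end

section
/- Let f₁ and f₂ be binary cubic forms with real coefficients such that disc(f₁) = disc(f₂) = δ with δ ∈ {1, −1}, where disc(aX³ + bX²Y + cXY² + dY³) = 18abcd + b²c² − 4ac³ − 4b³d − 27a²d². Then there exists a matrix M ∈ GL_2(ℝ) with det(M) = ±1 such that M·f₁ = f₂, where (M·f)(v) = det(M)^{-1} · f(Mᵀ v). In other words, SL_2^±(ℝ) = {g ∈ GL_2(ℝ) : det(g) = ±1} acts transitively on the set of real binary cubic forms of discriminant δ, for each δ ∈ {1, −1}. -/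
/-!
Every real binary cubic form `f` of discriminant `δ ≠ 0` is carried by a substitution of
determinant `1` to the normal form `x²y - (δ/4) y³`, which depends on `δ` only; transitivity
follows by composing one such substitution with the inverse of another.

For the normal form, a real root of `f` on the projective line (a cubic has one) is moved to
`(1 : 0)`, so that `f = y (b x² + c x y + d y²)`, with discriminant `b² (c² - 4 b d) ≠ 0`, whence
`b ≠ 0` (`normal_form_of_lead_zero`). Completing the square removes `c`, and the diagonal
substitution `(x, y) ↦ (x / b, b y)` makes the coefficient of `x²y` equal to `1`; the invariance
of the discriminant then forces the coefficient of `y³` to be `-δ/4`.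
-/

/-- A monic real cubic has a real root: with `K = 1 + |b| + |c| + |d|` its values at `±K` have
opposite signs. -/
lemma exists_root_monic_cubic (b c d : ℝ) : ∃ t : ℝ, t^3 + b*t^2 + c*t + d = 0 := by
  have hb := abs_nonneg b
  have hc := abs_nonneg c
  have hd := abs_nonneg d
  obtain ⟨K, hK⟩ : ∃ K, K = 1 + |b| + |c| + |d| := ⟨_, rfl⟩
  have hK1 : 1 ≤ K := by linarith
  -- The lower-order terms are at most `(|b| + |c| + |d|) K² = (K - 1) K² < K³`.
  have hb2 : |b| * K^2 + |c| * K + |d| ≤ K^3 := by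
    have e : K^3 = (1 + |b| + |c| + |d|) * K^2 := by rw [← hK]; ring
    have k1 : K ≤ K^2 := by nlinarith
    have k2 : 1 ≤ K^2 := by nlinarith
    nlinarith [mul_le_mul_of_nonneg_left k1 hc, mul_le_mul_of_nonneg_left k2 hd]
  have hK2 : 0 ≤ K^2 := sq_nonneg K
  have hK0 : 0 ≤ K := by linarith
  have hcont : ContinuousOn (fun t : ℝ => t^3 + b*t^2 + c*t + d) (Set.Icc (-K) K) := by
    fun_prop
  have hmem : (0 : ℝ) ∈ Set.Icc ((-K)^3 + b*(-K)^2 + c*(-K) + d) (K^3 + b*K^2 + c*K + d) := by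
    constructor
    · nlinarith [mul_le_mul_of_nonneg_right (le_abs_self b) hK2,
        mul_le_mul_of_nonneg_right (neg_abs_le c) hK0, le_abs_self d]
    · nlinarith [mul_le_mul_of_nonneg_right (neg_abs_le b) hK2,
        mul_le_mul_of_nonneg_right (neg_abs_le c) hK0, neg_abs_le d]
  obtain ⟨t, -, ht⟩ := intermediate_value_Icc (by linarith : -K ≤ K) hcont hmem
  exact ⟨t, ht⟩

/-- The normal form of a cubic form with a root at `(1 : 0)`. -/
lemma normal_form_of_lead_zero (δ : ℝ) (hδ : δ ≠ 0) (b c d : ℝ)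
    (h : b^2*c^2 - 4*b^3*d = δ) :
    ∃ p q r s : ℝ, p*s - q*r = 1 ∧ ∀ x y : ℝ,
      b*(p*x + r*y)^2*(q*x + s*y) + c*(p*x + r*y)*(q*x + s*y)^2 + d*(q*x + s*y)^3
        = x^2*y - δ/4*y^3 := by
  have hb : b ≠ 0 := by
    rintro rfl
    apply hδ
    rw [← h]
    ring
  refine ⟨1/b, 0, -c/2, b, by field_simp; ring, fun x y => ?_⟩
  rw [← h]
  field_simp
  ring

lemma normal_form (δ : ℝ) (hδ : δ ≠ 0) (a b c d : ℝ)
    (h : 18*a*b*c*d + b^2*c^2 - 4*a*c^3 - 4*b^3*d - 27*a^2*d^2 = δ) :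
    ∃ p q r s : ℝ, p*s - q*r = 1 ∧ ∀ x y : ℝ,
      a*(p*x + r*y)^3 + b*(p*x + r*y)^2*(q*x + s*y) + c*(p*x + r*y)*(q*x + s*y)^2
        + d*(q*x + s*y)^3 = x^2*y - δ/4*y^3 := by
  by_cases ha : a = 0
  · subst ha
    obtain ⟨p, q, r, s, hdet, hf⟩ :=
      normal_form_of_lead_zero δ hδ b c d (by rw [← h]; ring)
    exact ⟨p, q, r, s, hdet, fun x y => by rw [← hf x y]; ring⟩
  · obtain ⟨t, ht⟩ := exists_root_monic_cubic (b/a) (c/a) (d/a)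
    have hd : d = -(a*t^3 + b*t^2 + c*t) := by
      field_simp at ht
      linarith
    subst hd
    -- The substitution `(x, y) ↦ (t x - y, x)` moves the root `(t : 1)` to `(1 : 0)`.
    obtain ⟨p, q, r, s, hdet, hf⟩ :=
      normal_form_of_lead_zero δ hδ (-(3*a*t^2 + 2*b*t + c)) (3*a*t + b) (-a)
        (by rw [← h]; ring)
    refine ⟨t*p - q, p, t*r - s, r, by linear_combination hdet, fun x y => ?_⟩
    rw [← hf x y]
    ring

/-- Let `f₁, f₂` be real binary cubic forms with
`disc(f₁) = disc(f₂) = δ` where `δ ∈ {1, −1}` and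
`disc(aX³+bX²Y+cXY²+dY³) = 18abcd + b²c² − 4ac³ − 4b³d − 27a²d²`. Then there exists
`M ∈ GL₂(ℝ)` with `det M = ±1` and `M·f₁ = f₂`, where `(M·f)(v) = det(M)⁻¹ · f(Mᵀ v)`:
the group `SL₂^±(ℝ)` acts transitively on the real binary cubic forms of
discriminant `δ`. -/
theorem stmt18 (δ : ℝ) (hδ : δ = 1 ∨ δ = -1)
    (a₁ b₁ c₁ d₁ a₂ b₂ c₂ d₂ : ℝ)
    (h₁ : 18*a₁*b₁*c₁*d₁ + b₁^2*c₁^2 - 4*a₁*c₁^3 - 4*b₁^3*d₁ - 27*a₁^2*d₁^2 = δ)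
    (h₂ : 18*a₂*b₂*c₂*d₂ + b₂^2*c₂^2 - 4*a₂*c₂^3 - 4*b₂^3*d₂ - 27*a₂^2*d₂^2 = δ) :
    ∃ M : Matrix (Fin 2) (Fin 2) ℝ, (M.det = 1 ∨ M.det = -1) ∧
      ∀ x y : ℝ,
        a₂*x^3 + b₂*x^2*y + c₂*x*y^2 + d₂*y^3 =
          (M.det)⁻¹ * (a₁*(M 0 0*x + M 1 0*y)^3
            + b₁*(M 0 0*x + M 1 0*y)^2*(M 0 1*x + M 1 1*y)
            + c₁*(M 0 0*x + M 1 0*y)*(M 0 1*x + M 1 1*y)^2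
            + d₁*(M 0 1*x + M 1 1*y)^3) := by
  have hδ0 : δ ≠ 0 := by rcases hδ with rfl | rfl <;> norm_num
  obtain ⟨p, q, r, s, hdet, hf⟩ := normal_form δ hδ0 a₁ b₁ c₁ d₁ h₁
  obtain ⟨p', q', r', s', hdet', hg⟩ := normal_form δ hδ0 a₂ b₂ c₂ d₂ h₂
  -- `(x, y) ↦ (s' x - r' y, -q' x + p' y)` inverts the substitution normalising the second form.
  have hM : (!![p*s' - r*q', q*s' - s*q'; r*p' - p*r', s*p' - q*r'] :
      Matrix (Fin 2) (Fin 2) ℝ).det = 1 := by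
    rw [Matrix.det_fin_two_of]
    linear_combination (p'*s' - q'*r') * hdet + hdet'
  refine ⟨!![p*s' - r*q', q*s' - s*q'; r*p' - p*r', s*p' - q*r'], Or.inl hM, fun x y => ?_⟩
  have e₁ := hf (s'*x - r'*y) (p'*y - q'*x)
  have e₂ := hg (s'*x - r'*y) (p'*y - q'*x)
  have ex : p'*(s'*x - r'*y) + r'*(p'*y - q'*x) = x := by linear_combination x * hdet'
  have ey : q'*(s'*x - r'*y) + s'*(p'*y - q'*x) = y := by linear_combination y * hdet'
  rw [ex, ey, ← e₁] at e₂
  rw [hM, e₂]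
  simp only [Matrix.of_apply, Matrix.cons_val', Matrix.cons_val_zero, Matrix.cons_val_one,
    Matrix.cons_val_fin_one]
  ring
end

section
/- Let a, b, c, d ∈ ℤ. Define a ℤ-bilinear multiplication on the free ℤ-module ℤ³ with basis (e₀, ω₁, ω₂) by declaring e₀ to be the multiplicative identity and setting ω₁·ω₂ = ω₂·ω₁ = −ad·e₀, ω₁·ω₁ = −ac·e₀ − b·ω₁ + a·ω₂, and ω₂·ω₂ = −bd·e₀ − d·ω₁ + c·ω₂. Then this multiplication is commutative and associative, making ℤ³ a commutative ring S with unit e₀; moreover, the determinant of the 3×3 matrix (Tr(x_i x_j))_{i,j}, where (x₀, x₁, x₂) = (e₀, ω₁, ω₂) and Tr(x) denotes the trace of the ℤ-linear multiplication-by-x map on S, equals 18abcd + b²c² − 4ac³ − 4b³d − 27a²d². -/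
/-! Every algebraic law is a polynomial identity in the coordinates. For the discriminant,
`Tr e₀ = 3`, `Tr ω₁ = -b`, `Tr ω₂ = c` (`cubicRingTrace_eq`), so the trace form has Gram matrix
`!![3, -b, c; -b, b² - 2ac, -3ad; c, -3ad, c² - 2bd]`, whose determinant is the
discriminant of the cubic form. -/

/-- The multiplication on `ℤ³` (with basis `e₀ = Pi.single 0 1`, `ω₁ = Pi.single 1 1`,
`ω₂ = Pi.single 2 1`) obtained by ℤ-bilinear extension of: `e₀` is the identity,
`ω₁ω₂ = ω₂ω₁ = −ad·e₀`, `ω₁² = −ac·e₀ − b·ω₁ + a·ω₂`, `ω₂² = −bd·e₀ − d·ω₁ + c·ω₂`. -/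
def cubicRingMul (a b c d : ℤ) (x y : Fin 3 → ℤ) : Fin 3 → ℤ :=
  ![x 0 * y 0 - a*c*(x 1 * y 1) - a*d*(x 1 * y 2 + x 2 * y 1) - b*d*(x 2 * y 2),
    x 0 * y 1 + x 1 * y 0 - b*(x 1 * y 1) - d*(x 2 * y 2),
    x 0 * y 2 + x 2 * y 0 + a*(x 1 * y 1) + c*(x 2 * y 2)]

/-- The trace of the ℤ-linear multiplication-by-`x` endomorphism of `ℤ³` with respect to
the multiplication `cubicRingMul a b c d`. -/
def cubicRingTrace (a b c d : ℤ) (x : Fin 3 → ℤ) : ℤ :=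
  Matrix.trace (Matrix.of fun i j => cubicRingMul a b c d x (Pi.single j 1) i)

/-- In coordinates the trace is linear, with `Tr e₀ = 3`, `Tr ω₁ = -b`, `Tr ω₂ = c`. -/
lemma cubicRingTrace_eq (a b c d : ℤ) (x : Fin 3 → ℤ) :
    cubicRingTrace a b c d x = 3 * x 0 - b * x 1 + c * x 2 := by
  simp [cubicRingTrace, cubicRingMul, Matrix.trace, Fin.sum_univ_three]
  ring

/-- Let `a, b, c, d ∈ ℤ`. The ℤ-bilinear multiplication on `ℤ³` with
basis `(e₀, ω₁, ω₂)` determined by `e₀` being the identity and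
`ω₁ω₂ = ω₂ω₁ = −ad·e₀`, `ω₁² = −ac·e₀ − b·ω₁ + a·ω₂`, `ω₂² = −bd·e₀ − d·ω₁ + c·ω₂`
is commutative and associative, making `ℤ³` a commutative unital ring `S`; moreover the
determinant of the trace form matrix `(Tr(xᵢxⱼ))ᵢⱼ` with respect to the basis
`(e₀, ω₁, ω₂)` equals `18abcd + b²c² − 4ac³ − 4b³d − 27a²d²`, the discriminant of the
binary cubic form `aX³ + bX²Y + cXY² + dY³`. -/
theorem stmt19 (a b c d : ℤ) :
    -- `cubicRingMul` is ℤ-bilinear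
    (∀ x x' y : Fin 3 → ℤ,
      cubicRingMul a b c d (x + x') y = cubicRingMul a b c d x y + cubicRingMul a b c d x' y) ∧
    (∀ x y y' : Fin 3 → ℤ,
      cubicRingMul a b c d x (y + y') = cubicRingMul a b c d x y + cubicRingMul a b c d x y') ∧
    (∀ (k : ℤ) (x y : Fin 3 → ℤ),
      cubicRingMul a b c d (k • x) y = k • cubicRingMul a b c d x y) ∧
    (∀ (k : ℤ) (x y : Fin 3 → ℤ),
      cubicRingMul a b c d x (k • y) = k • cubicRingMul a b c d x y) ∧
    -- it has the prescribed structure constants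
    (cubicRingMul a b c d (Pi.single 1 1) (Pi.single 2 1) = -(a*d) • Pi.single 0 1) ∧
    (cubicRingMul a b c d (Pi.single 2 1) (Pi.single 1 1) = -(a*d) • Pi.single 0 1) ∧
    (cubicRingMul a b c d (Pi.single 1 1) (Pi.single 1 1) =
      -(a*c) • Pi.single 0 1 + (-b) • Pi.single 1 1 + a • Pi.single 2 1) ∧
    (cubicRingMul a b c d (Pi.single 2 1) (Pi.single 2 1) =
      -(b*d) • Pi.single 0 1 + (-d) • Pi.single 1 1 + c • Pi.single 2 1) ∧
    -- `e₀` is a multiplicative identity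
    (∀ x : Fin 3 → ℤ, cubicRingMul a b c d (Pi.single 0 1) x = x) ∧
    (∀ x : Fin 3 → ℤ, cubicRingMul a b c d x (Pi.single 0 1) = x) ∧
    -- commutativity and associativity
    (∀ x y : Fin 3 → ℤ, cubicRingMul a b c d x y = cubicRingMul a b c d y x) ∧
    (∀ x y z : Fin 3 → ℤ,
      cubicRingMul a b c d (cubicRingMul a b c d x y) z =
        cubicRingMul a b c d x (cubicRingMul a b c d y z)) ∧
    -- determinant of the trace form equals the discriminant of the cubic form
    ((Matrix.of fun i j : Fin 3 =>
        cubicRingTrace a b c d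
          (cubicRingMul a b c d (Pi.single i 1) (Pi.single j 1))).det =
      18*a*b*c*d + b^2*c^2 - 4*a*c^3 - 4*b^3*d - 27*a^2*d^2) := by
  refine ⟨?_, ?_, ?_, ?_, ?_, ?_, ?_, ?_, ?_, ?_, ?_, ?_, ?_⟩
  case refine_13 =>
    simp [Matrix.det_fin_three, cubicRingTrace_eq, cubicRingMul]
    ring
  all_goals
    intros
    ext i
    fin_cases i <;> simp [cubicRingMul] <;> ring
end
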